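/- Properties of the checkers type preorder: (1) Compatibility: for checkers terms t, u, if ⟦t⟧⊛ ⊆ ⟦u⟧⊛ then ⟦C⟨t⟩⟧⊛ ⊆ ⟦C⟨u⟩⟧⊛ for every checkers context C; (2) Silent β-invariance: if t →τ u then ⟦t⟧⊛ = ⟦u⟧⊛. -/

import Mathlib

set_option autoImplicit false

/-! ### Players -/

inductive Player : Type
  | white
  | black
deriving DecidableEq

/-- The opposite player. -/
def Player.op : Player → Player
  | .white => .black
  | .black => .white

/-- `gamma p q` is `0` if the players agree (silent) and `1` otherwise (interaction). -/
def Player.gamma (p q : Player) : ℕ := if p = q then 0 else 1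

/-! ### Ordinary λ-terms (de Bruijn representation) -/

inductive Lam : Type
  | var : ℕ → Lam
  | lam : Lam → Lam
  | app : Lam → Lam → Lam
deriving DecidableEq

namespace Lam

/-- Shift the free de Bruijn indices ≥ `d` by one. -/
def liftAt : Lam → ℕ → Lam
  | .var n, d => .var (if n < d then n else n + 1)
  | .lam t, d => .lam (t.liftAt (d + 1))
  | .app t u, d => .app (t.liftAt d) (u.liftAt d)

/-- Capture-avoiding substitution of `u` for the de Bruijn index `x`. -/
def subst : Lam → ℕ → Lam → Lam
  | .var n, x, u => if n = x then u else if x < n then .var (n - 1) else .var n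
  | .lam t, x, u => .lam (t.subst (x + 1) (u.liftAt 0))
  | .app t s, x, u => .app (t.subst x u) (s.subst x u)

end Lam

/-- Root β-rule: `(λx.t) u ↦ t[x:=u]`. -/
inductive LBetaRoot : Lam → Lam → Prop
  | beta (t u : Lam) : LBetaRoot (.app (.lam t) u) (t.subst 0 u)

/-- Root η-rule: `λx. t x ↦ t` with `x ∉ FV(t)` (enforced by the lifting). -/
inductive LEtaRoot : Lam → Lam → Prop
  | eta (t : Lam) : LEtaRoot (.lam (.app (t.liftAt 0) (.var 0))) t

/-- Closure of a root relation under all contexts. -/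
inductive LFull (R : Lam → Lam → Prop) : Lam → Lam → Prop
  | root {t u : Lam} : R t u → LFull R t u
  | lam {t u : Lam} : LFull R t u → LFull R (.lam t) (.lam u)
  | appL {t t' : Lam} (u : Lam) : LFull R t t' → LFull R (.app t u) (.app t' u)
  | appR (t : Lam) {u u' : Lam} : LFull R u u' → LFull R (.app t u) (.app t u')

/-- Closure under applicative spine contexts `⟨·⟩ t1 … tk`. -/
inductive LSpine (R : Lam → Lam → Prop) : Lam → Lam → Prop
  | root {t u : Lam} : R t u → LSpine R t u
  | appL {t t' : Lam} (u : Lam) : LSpine R t t' → LSpine R (.app t u) (.app t' u)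

/-- Closure under head contexts `λx1…xn.⟨·⟩ t1 … tk`. -/
inductive LHead (R : Lam → Lam → Prop) : Lam → Lam → Prop
  | spine {t u : Lam} : LSpine R t u → LHead R t u
  | lam {t u : Lam} : LHead R t u → LHead R (.lam t) (.lam u)

/-- β-reduction. -/
def LBeta : Lam → Lam → Prop := LFull LBetaRoot
/-- η-reduction. -/
def LEta : Lam → Lam → Prop := LFull LEtaRoot
/-- Head reduction. -/
def LHStep : Lam → Lam → Prop := LHead LBetaRoot
/-- Multistep head reduction. -/
def LHSteps : Lam → Lam → Prop := Relation.ReflTransGen LHStep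

/-- β-conversion (reflexive-symmetric-transitive closure of β-reduction). -/
def LBetaConv : Lam → Lam → Prop :=
  Relation.ReflTransGen (fun a b => LBeta a b ∨ LBeta b a)
/-- η-conversion. -/
def LEtaConv : Lam → Lam → Prop :=
  Relation.ReflTransGen (fun a b => LEta a b ∨ LEta b a)

/-- Head normal forms: no head step out of `t`. -/
def Lam.LHNF (t : Lam) : Prop := ∀ u, ¬ LHStep t u

/-- Head convergence: `t ⇓h`. -/
def Lam.HConv (t : Lam) : Prop := ∃ h, LHSteps t h ∧ h.LHNF

/-- Ordinary contexts (one hole). -/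
inductive LCtx : Type
  | hole : LCtx
  | lam : LCtx → LCtx
  | appL : LCtx → Lam → LCtx
  | appR : Lam → LCtx → LCtx

/-- Plugging (allowing variable capture). -/
def LCtx.fill : LCtx → Lam → Lam
  | .hole, t => t
  | .lam C, t => .lam (C.fill t)
  | .appL C u, t => .app (C.fill t) u
  | .appR s C, t => .app s (C.fill t)

/-- Head contextual preorder on λ-terms. -/
def CtxLe (t u : Lam) : Prop := ∀ C : LCtx, (C.fill t).HConv → (C.fill u).HConv

/-! ### Checkers terms -/

inductive CTerm : Type
  | var : ℕ → CTerm
  | lam : Player → CTerm → CTerm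
  | app : Player → CTerm → CTerm → CTerm
deriving DecidableEq

namespace CTerm

/-- Shift the free de Bruijn indices ≥ `d` by one. -/
def liftAt : CTerm → ℕ → CTerm
  | .var n, d => .var (if n < d then n else n + 1)
  | .lam p t, d => .lam p (t.liftAt (d + 1))
  | .app p t u, d => .app p (t.liftAt d) (u.liftAt d)

/-- Capture-avoiding substitution of `u` for the de Bruijn index `x`. -/
def subst : CTerm → ℕ → CTerm → CTerm
  | .var n, x, u => if n = x then u else if x < n then .var (n - 1) else .var n
  | .lam p t, x, u => .lam p (t.subst (x + 1) (u.liftAt 0))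
  | .app p t s, x, u => .app p (t.subst x u) (s.subst x u)

/-- The underlying ordinary λ-term of a checkers term. -/
def untag : CTerm → Lam
  | .var n => .var n
  | .lam _ t => .lam t.untag
  | .app _ t u => .app t.untag u.untag

end CTerm

/-- Player lifting: tag every abstraction and application with player `p`. -/
def Lam.tag : Lam → Player → CTerm
  | .var n, _ => .var n
  | .lam t, p => .lam p (t.tag p)
  | .app t u, p => .app p (t.tag p) (u.tag p)

/-- Silent β root rule: the abstraction and the application carry the same player. -/
inductive SilentRoot : CTerm → CTerm → Prop
  | beta (p : Player) (t u : CTerm) : SilentRoot (.app p (.lam p t) u) (t.subst 0 u)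

/-- Interaction β root rule: the application carries the opposite player of the abstraction. -/
inductive InterRoot : CTerm → CTerm → Prop
  | beta (p : Player) (t u : CTerm) : InterRoot (.app p.op (.lam p t) u) (t.subst 0 u)

/-- Closure of a root relation under all checkers contexts. -/
inductive CFull (R : CTerm → CTerm → Prop) : CTerm → CTerm → Prop
  | root {t u : CTerm} : R t u → CFull R t u
  | lam (p : Player) {t u : CTerm} : CFull R t u → CFull R (.lam p t) (.lam p u)
  | appL (p : Player) {t t' : CTerm} (u : CTerm) : CFull R t t' → CFull R (.app p t u) (.app p t' u)
  | appR (p : Player) (t : CTerm) {u u' : CTerm} : CFull R u u' → CFull R (.app p t u) (.app p t u')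

/-- Closure under applicative spine contexts `⟨·⟩ @_{q1} t1 … @_{qk} tk`. -/
inductive CSpine (R : CTerm → CTerm → Prop) : CTerm → CTerm → Prop
  | root {t u : CTerm} : R t u → CSpine R t u
  | appL (p : Player) {t t' : CTerm} (u : CTerm) : CSpine R t t' → CSpine R (.app p t u) (.app p t' u)

/-- Closure under checkers head contexts `λ_{p1}x1…λ_{pn}xn.⟨·⟩ @_{q1} t1 … @_{qk} tk`. -/
inductive CHead (R : CTerm → CTerm → Prop) : CTerm → CTerm → Prop
  | spine {t u : CTerm} : CSpine R t u → CHead R t u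
  | lam (p : Player) {t u : CTerm} : CHead R t u → CHead R (.lam p t) (.lam p u)

/-- Silent β-reduction `→τ`. -/
def StepTau : CTerm → CTerm → Prop := CFull SilentRoot
/-- Interaction β-reduction `→⊛`. -/
def StepInt : CTerm → CTerm → Prop := CFull InterRoot
/-- Checkers β-reduction `→βch`. -/
def StepBch (t u : CTerm) : Prop := StepTau t u ∨ StepInt t u

/-- Silent head reduction `→hτ`. -/
def HStepTau : CTerm → CTerm → Prop := CHead SilentRoot
/-- Interaction head reduction `→h⊛`. -/
def HStepInt : CTerm → CTerm → Prop := CHead InterRoot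
/-- Checkers head reduction `→hch`. -/
def HStepCh (t u : CTerm) : Prop := HStepTau t u ∨ HStepInt t u

/-- Checkers head normal form. -/
def CTerm.HNF (t : CTerm) : Prop := ∀ u, ¬ HStepCh t u

/-- `BigStep t k` means `t ⇓^k`: the (deterministic) checkers head evaluation of `t`
terminates and performs exactly `k` interaction steps. -/
inductive BigStep : CTerm → ℕ → Prop
  | nf {t : CTerm} : t.HNF → BigStep t 0
  | silent {t u : CTerm} {k : ℕ} : HStepTau t u → BigStep u k → BigStep t k
  | inter {t u : CTerm} {k : ℕ} : HStepInt t u → BigStep u k → BigStep t (k + 1)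

/-- `HRed t n i u`: a checkers head reduction sequence from `t` to `u` of length `n`
containing exactly `i` interaction steps. -/
inductive HRed : CTerm → ℕ → ℕ → CTerm → Prop
  | refl (t : CTerm) : HRed t 0 0 t
  | silent {t u s : CTerm} {n i : ℕ} : HStepTau t u → HRed u n i s → HRed t (n + 1) i s
  | inter {t u s : CTerm} {n i : ℕ} : HStepInt t u → HRed u n i s → HRed t (n + 1) (i + 1) s

/-- Checkers contexts (one hole). -/
inductive CCtx : Type
  | hole : CCtx
  | lam : Player → CCtx → CCtx
  | appL : Player → CCtx → CTerm → CCtx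
  | appR : Player → CTerm → CCtx → CCtx

/-- Plugging (allowing variable capture). -/
def CCtx.fill : CCtx → CTerm → CTerm
  | .hole, t => t
  | .lam p C, t => .lam p (C.fill t)
  | .appL p C u, t => .app p (C.fill t) u
  | .appR p s C, t => .app p s (C.fill t)

/-- Player lifting of ordinary contexts. -/
def LCtx.tag : LCtx → Player → CCtx
  | .hole, _ => .hole
  | .lam C, p => .lam p (C.tag p)
  | .appL C u, p => .appL p (C.tag p) (u.tag p)
  | .appR s C, p => .appR p (s.tag p) (C.tag p)

/-- Checkers interaction preorder `≼ctx⊛` on checkers terms. -/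
def IntCtxLe (t u : CTerm) : Prop :=
  ∀ (C : CCtx) (k : ℕ), BigStep (C.fill t) k → BigStep (C.fill u) k

/-- Checkers interaction improvement `≼imp⊛` on checkers terms. -/
def ImpCtxLe (t u : CTerm) : Prop :=
  ∀ (C : CCtx) (k : ℕ), BigStep (C.fill t) k → ∃ k', k' ≤ k ∧ BigStep (C.fill u) k'

/-- Interaction preorder `⊑int` on ordinary λ-terms, via black lifting. -/
def IntLe (t u : Lam) : Prop := IntCtxLe (t.tag .black) (u.tag .black)

/-- Interaction improvement `⊑int·imp` on ordinary λ-terms, via black lifting. -/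
def ImpLe (t u : Lam) : Prop := ImpCtxLe (t.tag .black) (u.tag .black)

/-- Interaction equivalence `≡int`. -/
def IntEq (t u : Lam) : Prop := IntLe t u ∧ IntLe u t

/-- Silent conversion `=τ`: reflexive-symmetric-transitive closure of `→τ`. -/
def SilentConv : CTerm → CTerm → Prop :=
  Relation.ReflTransGen (fun a b => StepTau a b ∨ StepTau b a)


/-! ### Checkers multi types -/

/-- Linear types: an atom `X` and arrows `M →_{p,q} L`, where a multi type `M`
is a finite multiset of linear types (syntactically represented as a list). -/
inductive LType : Type
  | atom : LType
  | arrow : List LType → Player → Player → LType → LType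

/-- Type environments: a multi type for every de Bruijn index. -/
abbrev TEnv : Type := ℕ → Multiset LType

/-- The empty type environment. -/
def TEnv.zero : TEnv := fun _ => 0

/-- Pointwise multiset union of type environments. -/
def TEnv.add (Γ Δ : TEnv) : TEnv := fun n => Γ n + Δ n

/-- The environment assigning `[L]` to `x` and `0` elsewhere. -/
def TEnv.single (x : ℕ) (L : LType) : TEnv := fun n => if n = x then {L} else 0

/-- Extend an environment with a multi type for the freshly bound de Bruijn index `0`. -/
def TEnv.cons (M : Multiset LType) (Γ : TEnv) : TEnv := fun n =>
  match n with
  | 0 => M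
  | n + 1 => Γ n

mutual
  /-- Type derivations `π ▷ Γ ⊢^k t : L` of the checkers multi type system. -/
  inductive Deriv : TEnv → ℕ → CTerm → LType → Type
    | ax (x : ℕ) (L : LType) : Deriv (TEnv.single x L) 0 (.var x) L
    | lam {Γ : TEnv} {k : ℕ} {t : CTerm} {L : LType} (p q : Player) (M : List LType) :
        Deriv (TEnv.cons (Multiset.ofList M) Γ) k t L →
        Deriv Γ k (.lam p t) (.arrow M p q L)
    | app {Γ Δ : TEnv} {k₁ k₂ : ℕ} {t u : CTerm} {M : List LType} {p q : Player} {L : LType} :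
        Deriv Γ k₁ t (.arrow M p q L) → DerivM Δ k₂ u M →
        Deriv (TEnv.add Γ Δ) (k₁ + k₂ + Player.gamma p q) (.app q t u) L
  /-- Derivations `Γ ⊢^k t : M` of a multi type (the `many` rule). -/
  inductive DerivM : TEnv → ℕ → CTerm → List LType → Type
    | nil (t : CTerm) : DerivM TEnv.zero 0 t []
    | cons {Γ Δ : TEnv} {k k' : ℕ} {t : CTerm} {L : LType} {M : List LType} :
        Deriv Γ k t L → DerivM Δ k' t M → DerivM (TEnv.add Γ Δ) (k + k') t (L :: M)
end

mutual
  /-- The (applicative) size `|π|` of a derivation: its number of `@` rules. -/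
  def Deriv.size {Γ : TEnv} {k : ℕ} {t : CTerm} {L : LType} : Deriv Γ k t L → ℕ
    | .ax _ _ => 0
    | .lam _ _ _ π => Deriv.size π
    | .app π μ => Deriv.size π + DerivM.size μ + 1
  /-- Size of a multi-type derivation. -/
  def DerivM.size {Γ : TEnv} {k : ℕ} {t : CTerm} {M : List LType} : DerivM Γ k t M → ℕ
    | .nil _ => 0
    | .cons π μ => Deriv.size π + DerivM.size μ
end

/-- Typability `Γ ⊢^k t : L`. -/
def TJ (Γ : TEnv) (k : ℕ) (t : CTerm) (L : LType) : Prop := Nonempty (Deriv Γ k t L)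

/-- Checkers relational interpretation `⟦t⟧⊛ = {(Γ, k, L) | Γ ⊢^k t : L}`. -/
def CSem (t : CTerm) : Set (TEnv × ℕ × LType) := {x | TJ x.1 x.2.1 t x.2.2}

/-- Black type preorder `⊑•type` on ordinary λ-terms. -/
def BTypeLe (t u : Lam) : Prop := CSem (t.tag .black) ⊆ CSem (u.tag .black)

/-! ### Tight typings -/

/-- All arrows occurring in a linear type are silent (`p = q`). -/
inductive AllSilent : LType → Prop
  | atom : AllSilent .atom
  | arrow {M : List LType} {p : Player} {L : LType} :
      (∀ L' ∈ M, AllSilent L') → AllSilent L → AllSilent (.arrow M p p L)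

/-- The number of nonempty multi types occurring in a linear type. -/
def LType.neCount : LType → ℕ
  | .atom => 0
  | .arrow M _ _ L =>
      min M.length 1 + (M.attach.map fun x => LType.neCount x.1).sum + LType.neCount L
decreasing_by
  · have := List.sizeOf_lt_of_mem x.2
    simp only [LType.arrow.sizeOf_spec]
    omega
  · simp only [LType.arrow.sizeOf_spec]
    omega

/-- The number of nonempty multi types occurring in a multi type (counting itself). -/
def mNeCount (m : Multiset LType) : ℕ :=
  min (Multiset.card m) 1 + (m.map LType.neCount).sum

/-- A typing `(Γ, L)` is tight when all the multi types occurring in `Γ` and `L`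
are empty except for exactly one, and all arrows occurring in `(Γ, L)` are silent. -/
def Tight (Γ : TEnv) (L : LType) : Prop :=
  AllSilent L ∧ (∀ n : ℕ, ∀ L' ∈ Γ n, AllSilent L') ∧
    ∃ S : Finset ℕ, (∀ n : ℕ, n ∉ S → Γ n = 0) ∧
      (∑ n ∈ S, mNeCount (Γ n)) + LType.neCount L = 1


/-- Propositional version of `DerivM`. -/
def TM (Γ : TEnv) (k : ℕ) (t : CTerm) (M : List LType) : Prop := Nonempty (DerivM Γ k t M)

theorem tj_var {Γ : TEnv} {k x : ℕ} {L : LType} :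
    TJ Γ k (.var x) L ↔ Γ = TEnv.single x L ∧ k = 0 := by
  constructor
  · rintro ⟨d⟩
    cases d
    exact ⟨rfl, rfl⟩
  · rintro ⟨rfl, rfl⟩
    exact ⟨.ax _ _⟩

theorem tj_lam {Γ : TEnv} {k : ℕ} {p : Player} {t : CTerm} {L : LType} :
    TJ Γ k (.lam p t) L ↔
      ∃ q M L', L = .arrow M p q L' ∧ TJ (TEnv.cons (Multiset.ofList M) Γ) k t L' := by
  constructor
  · rintro ⟨d⟩
    cases d with
    | lam p q M d => exact ⟨q, M, _, rfl, ⟨d⟩⟩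
  · rintro ⟨q, M, L', rfl, ⟨d⟩⟩
    exact ⟨.lam _ _ _ d⟩

theorem tj_app {Γ : TEnv} {k : ℕ} {q : Player} {t u : CTerm} {L : LType} :
    TJ Γ k (.app q t u) L ↔
      ∃ Γ₁ Δ k₁ k₂ M p, Γ = Γ₁ + Δ ∧ k = k₁ + k₂ + Player.gamma p q ∧
        TJ Γ₁ k₁ t (.arrow M p q L) ∧ TM Δ k₂ u M := by
  constructor
  · rintro ⟨d⟩
    cases d with
    | app d e => exact ⟨_, _, _, _, _, _, rfl, rfl, ⟨d⟩, ⟨e⟩⟩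
  · rintro ⟨Γ₁, Δ, k₁, k₂, M, p, rfl, rfl, ⟨d⟩, ⟨e⟩⟩
    exact ⟨.app d e⟩

theorem tm_nil {Γ : TEnv} {k : ℕ} {t : CTerm} :
    TM Γ k t [] ↔ Γ = 0 ∧ k = 0 := by
  constructor
  · rintro ⟨d⟩
    cases d
    exact ⟨rfl, rfl⟩
  · rintro ⟨rfl, rfl⟩
    exact ⟨.nil _⟩

theorem tm_cons {Γ : TEnv} {k : ℕ} {t : CTerm} {L : LType} {M : List LType} :
    TM Γ k t (L :: M) ↔ ∃ Γ₁ Δ k₁ k₂, Γ = Γ₁ + Δ ∧ k = k₁ + k₂ ∧ TJ Γ₁ k₁ t L ∧ TM Δ k₂ t M := by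
  constructor
  · rintro ⟨d⟩
    cases d with
    | cons d e => exact ⟨_, _, _, _, rfl, rfl, ⟨d⟩, ⟨e⟩⟩
  · rintro ⟨Γ₁, Δ, k₁, k₂, rfl, rfl, ⟨d⟩, ⟨e⟩⟩
    exact ⟨.cons d e⟩

theorem tm_mono {t u : CTerm} (h : ∀ Γ k L, TJ Γ k t L → TJ Γ k u L) :
    ∀ (M : List LType) Γ k, TM Γ k t M → TM Γ k u M := by
  intro M
  induction M with
  | nil => intro Γ k; rw [tm_nil, tm_nil]; exact id
  | cons L M ih =>
    intro Γ k
    rw [tm_cons, tm_cons]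
    rintro ⟨Γ₁, Δ, k₁, k₂, rfl, rfl, d, e⟩
    exact ⟨_, _, _, _, rfl, rfl, h _ _ _ d, ih _ _ e⟩

theorem tm_append {t : CTerm} {N : List LType} : ∀ {M : List LType} {Γ : TEnv} {k : ℕ},
    TM Γ k t (M ++ N) ↔ ∃ Γ₁ Δ k₁ k₂, Γ = Γ₁ + Δ ∧ k = k₁ + k₂ ∧ TM Γ₁ k₁ t M ∧ TM Δ k₂ t N := by
  intro M
  induction M with
  | nil =>
    intro Γ k
    constructor
    · intro h
      exact ⟨0, Γ, 0, k, by simp, by simp, tm_nil.2 ⟨rfl, rfl⟩, h⟩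
    · rintro ⟨Γ₁, Δ, k₁, k₂, rfl, rfl, d, e⟩
      obtain ⟨rfl, rfl⟩ := tm_nil.1 d
      simpa using e
  | cons L M ih =>
    intro Γ k
    rw [List.cons_append, tm_cons]
    constructor
    · rintro ⟨Γ₁, Δ, k₁, k₂, rfl, rfl, d, e⟩
      obtain ⟨Γ₂, Δ', k₃, k₄, rfl, rfl, d', e'⟩ := ih.1 e
      exact ⟨Γ₁ + Γ₂, Δ', k₁ + k₃, k₄, by rw [add_assoc], by rw [add_assoc],
        tm_cons.2 ⟨_, _, _, _, rfl, rfl, d, d'⟩, e'⟩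
    · rintro ⟨Γ₁, Δ, k₁, k₂, rfl, rfl, d, e⟩
      obtain ⟨Γ₂, Δ', k₃, k₄, rfl, rfl, d', e'⟩ := tm_cons.1 d
      exact ⟨_, _, _, _, by rw [add_assoc], by rw [add_assoc], d',
        ih.2 ⟨_, _, _, _, rfl, rfl, e', e⟩⟩

theorem tm_perm {t : CTerm} {M N : List LType} (h : M.Perm N) :
    ∀ {Γ : TEnv} {k : ℕ}, TM Γ k t M → TM Γ k t N := by
  induction h with
  | nil => exact id
  | cons L _ ih =>
    intro Γ k
    rw [tm_cons, tm_cons]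
    rintro ⟨Γ₁, Δ, k₁, k₂, rfl, rfl, d, e⟩
    exact ⟨_, _, _, _, rfl, rfl, d, ih e⟩
  | swap A B M =>
    intro Γ k h
    obtain ⟨Γ₁, Δ, k₁, k₂, rfl, rfl, d, e⟩ := tm_cons.1 h
    obtain ⟨Γ₂, Δ', k₃, k₄, rfl, rfl, d', e'⟩ := tm_cons.1 e
    exact tm_cons.2 ⟨Γ₂, Γ₁ + Δ', k₃, k₁ + k₄, by abel, by omega, d',
      tm_cons.2 ⟨_, _, _, _, rfl, rfl, d, e'⟩⟩
  | trans _ _ ih₁ ih₂ => exact fun h => ih₂ (ih₁ h)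

/-- Remove index `d` from an environment. -/
def drop (d : ℕ) (Γ : TEnv) : TEnv := fun n => Γ (if n < d then n else n + 1)

/-- Insert an empty multi type at index `d`. -/
def ins (d : ℕ) (Γ : TEnv) : TEnv := fun n => if n < d then Γ n else if n = d then 0 else Γ (n - 1)

theorem drop_add (d : ℕ) (Γ Δ : TEnv) : drop d (Γ + Δ) = drop d Γ + drop d Δ := rfl
theorem drop_zero (d : ℕ) : drop d 0 = 0 := rfl

theorem drop_ins (d : ℕ) (Γ : TEnv) : drop d (ins d Γ) = Γ := by
  funext n
  simp only [drop, ins]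
  split_ifs <;> first | rfl | omega

theorem ins_self (d : ℕ) (Γ : TEnv) : ins d Γ d = 0 := by simp [ins]

theorem env_ext (d : ℕ) {Γ Δ : TEnv} (h₁ : Γ d = Δ d) (h₂ : drop d Γ = drop d Δ) : Γ = Δ := by
  funext n
  rcases lt_trichotomy n d with h | rfl | h
  · simpa [drop, h] using congrFun h₂ n
  · exact h₁
  · have := congrFun h₂ (n - 1)
    simp only [drop] at this
    rw [if_neg (by omega), show n - 1 + 1 = n by omega] at this
    exact this

theorem drop_cons (d : ℕ) (M : Multiset LType) (Γ : TEnv) :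
    drop (d + 1) (TEnv.cons M Γ) = TEnv.cons M (drop d Γ) := by
  funext n
  cases n with
  | zero => simp [drop, TEnv.cons]
  | succ n =>
    simp only [drop, TEnv.cons, Nat.add_lt_add_iff_right]
    split_ifs <;> rfl

theorem drop0_cons (M : Multiset LType) (Γ : TEnv) : drop 0 (TEnv.cons M Γ) = Γ := by
  funext n
  simp [drop, TEnv.cons]

theorem cons_drop0 (Γ : TEnv) : TEnv.cons (Γ 0) (drop 0 Γ) = Γ := by
  funext n
  cases n <;> simp [drop, TEnv.cons]

theorem drop_single_lt {d n : ℕ} (h : n < d) (L : LType) :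
    drop d (TEnv.single n L) = TEnv.single n L := by
  funext m
  simp only [drop, TEnv.single]
  split_ifs <;> first | rfl | omega

theorem drop_single_gt {d n : ℕ} (h : d < n) (L : LType) :
    drop d (TEnv.single n L) = TEnv.single (n - 1) L := by
  funext m
  simp only [drop, TEnv.single]
  split_ifs <;> first | rfl | omega

theorem drop_single_eq (d : ℕ) (L : LType) :
    drop d (TEnv.single d L) = 0 := by
  funext m
  simp only [drop, TEnv.single]
  split_ifs <;> first | rfl | omega

theorem tm_lift_aux {t t' : CTerm} {d : ℕ}
    (h : ∀ Γ k L, TJ Γ k t' L ↔ Γ d = 0 ∧ TJ (drop d Γ) k t L) :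
    ∀ (M : List LType) Γ k, TM Γ k t' M ↔ Γ d = 0 ∧ TM (drop d Γ) k t M := by
  intro M
  induction M with
  | nil =>
    intro Γ k
    rw [tm_nil, tm_nil]
    constructor
    · rintro ⟨rfl, rfl⟩
      exact ⟨rfl, rfl, rfl⟩
    · rintro ⟨h0, h1, rfl⟩
      exact ⟨env_ext d h0 h1, rfl⟩
  | cons L M ih =>
    intro Γ k
    rw [tm_cons, tm_cons]
    constructor
    · rintro ⟨Γ₁, Δ, k₁, k₂, rfl, rfl, a, b⟩
      rw [h] at a
      rw [ih] at b
      exact ⟨by simp [a.1, b.1], _, _, _, _, drop_add _ _ _, rfl, a.2, b.2⟩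
    · rintro ⟨h0, Γ₁, Δ, k₁, k₂, e, rfl, a, b⟩
      refine ⟨ins d Γ₁, ins d Δ, k₁, k₂, env_ext d ?_ ?_, rfl, ?_, ?_⟩
      · simp [h0, ins_self]
      · rw [e, drop_add, drop_ins, drop_ins]
      · rw [h, drop_ins]; exact ⟨ins_self _ _, a⟩
      · rw [ih, drop_ins]; exact ⟨ins_self _ _, b⟩

theorem tj_lift (t : CTerm) : ∀ (d : ℕ) (Γ : TEnv) (k : ℕ) (L : LType),
    TJ Γ k (t.liftAt d) L ↔ Γ d = 0 ∧ TJ (drop d Γ) k t L := by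
  induction t with
  | var n =>
    intro d Γ k L
    simp only [CTerm.liftAt, tj_var]
    by_cases hn : n < d
    · simp only [hn, if_true]
      constructor
      · rintro ⟨rfl, rfl⟩
        exact ⟨by simp [TEnv.single]; omega, drop_single_lt hn L, rfl⟩
      · rintro ⟨h0, h1, rfl⟩
        refine ⟨env_ext d ?_ ?_, rfl⟩
        · rw [h0]; simp [TEnv.single]; omega
        · rw [h1, drop_single_lt hn]
    · simp only [hn, if_false]
      constructor
      · rintro ⟨rfl, rfl⟩
        exact ⟨by simp [TEnv.single]; omega, drop_single_gt (by omega) L, rfl⟩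
      · rintro ⟨h0, h1, rfl⟩
        refine ⟨env_ext d ?_ ?_, rfl⟩
        · rw [h0]; simp [TEnv.single]; omega
        · rw [h1, drop_single_gt (by omega)]; rfl
  | lam p t ih =>
    intro d Γ k L
    simp only [CTerm.liftAt, tj_lam, ih, drop_cons]
    constructor
    · rintro ⟨q, M, L', rfl, h0, h⟩
      exact ⟨h0, q, M, L', rfl, h⟩
    · rintro ⟨h0, q, M, L', rfl, h⟩
      exact ⟨q, M, L', rfl, h0, h⟩
  | app q t u iht ihu =>
    intro d Γ k L
    have ihM := tm_lift_aux (ihu d)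
    simp only [CTerm.liftAt]
    rw [tj_app, tj_app]
    constructor
    · rintro ⟨Γ₁, Δ, k₁, k₂, M, p, rfl, rfl, a, b⟩
      rw [iht] at a
      rw [ihM] at b
      exact ⟨by simp [a.1, b.1], _, _, _, _, _, _, drop_add _ _ _, rfl, a.2, b.2⟩
    · rintro ⟨h0, Γ₁, Δ, k₁, k₂, M, p, e, rfl, a, b⟩
      refine ⟨ins d Γ₁, ins d Δ, k₁, k₂, M, p, env_ext d ?_ ?_, rfl, ?_, ?_⟩
      · simp [h0, ins_self]
      · rw [e, drop_add, drop_ins, drop_ins]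
      · rw [iht, drop_ins]; exact ⟨ins_self _ _, a⟩
      · rw [ihM, drop_ins]; exact ⟨ins_self _ _, b⟩

theorem tm_lift (t : CTerm) (d : ℕ) (M : List LType) (Γ : TEnv) (k : ℕ) :
    TM Γ k (t.liftAt d) M ↔ Γ d = 0 ∧ TM (drop d Γ) k t M :=
  tm_lift_aux (tj_lift t d) M Γ k

/-- Splitting the argument derivation along a sum. -/
theorem tm_split {u : CTerm} {M : List LType} {A B : Multiset LType} {Δ : TEnv} {k : ℕ}
    (hM : A + B = (M : Multiset LType)) (h : TM Δ k u M) :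
    ∃ MA MB Δ₁ Δ₂ k₁ k₂, A = Multiset.ofList MA ∧ B = Multiset.ofList MB ∧ Δ = Δ₁ + Δ₂ ∧
      k = k₁ + k₂ ∧ TM Δ₁ k₁ u MA ∧ TM Δ₂ k₂ u MB := by
  have hp : M.Perm (A.toList ++ B.toList) := by
    rw [← Multiset.coe_eq_coe, ← hM, ← Multiset.coe_add]
    simp
  obtain ⟨Δ₁, Δ₂, k₁, k₂, h1, h2, h3, h4⟩ := tm_append.1 (tm_perm hp h)
  exact ⟨_, _, _, _, _, _, by simp, by simp, h1, h2, h3, h4⟩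

theorem tm_subst_aux {s s' u : CTerm} {x : ℕ}
    (h : ∀ Γ k L, TJ Γ k s' L ↔ ∃ Γ₁ Δ k₁ k₂ M, Γ = drop x Γ₁ + Δ ∧ k = k₁ + k₂ ∧
      Γ₁ x = Multiset.ofList M ∧ TJ Γ₁ k₁ s L ∧ TM Δ k₂ u M) :
    ∀ (N : List LType) Γ k, TM Γ k s' N ↔ ∃ Γ₁ Δ k₁ k₂ M, Γ = drop x Γ₁ + Δ ∧ k = k₁ + k₂ ∧
      Γ₁ x = Multiset.ofList M ∧ TM Γ₁ k₁ s N ∧ TM Δ k₂ u M := by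
  intro N
  induction N with
  | nil =>
    intro Γ k
    rw [tm_nil]
    constructor
    · rintro ⟨rfl, rfl⟩
      exact ⟨0, 0, 0, 0, [], by simp [drop_zero], rfl, rfl, tm_nil.2 ⟨rfl, rfl⟩,
        tm_nil.2 ⟨rfl, rfl⟩⟩
    · rintro ⟨Γ₁, Δ, k₁, k₂, M, rfl, rfl, hM, a, b⟩
      obtain ⟨rfl, rfl⟩ := tm_nil.1 a
      have : M = [] := by
        have : Multiset.ofList M = 0 := hM.symm
        simpa using this
      subst this
      obtain ⟨rfl, rfl⟩ := tm_nil.1 b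
      exact ⟨by simp [drop_zero], rfl⟩
  | cons L N ih =>
    intro Γ k
    constructor
    · intro h'
      obtain ⟨Γ₁, Δ, k₁, k₂, rfl, rfl, a, b⟩ := tm_cons.1 h'
      obtain ⟨Γa, Δa, ka, ka', Ma, rfl, rfl, ea, a1, a2⟩ := (h _ _ _).1 a
      obtain ⟨Γb, Δb, kb, kb', Mb, rfl, rfl, eb, b1, b2⟩ := (ih _ _).1 b
      refine ⟨Γa + Γb, Δa + Δb, ka + kb, ka' + kb', Ma ++ Mb, ?_, by omega, ?_,
        tm_cons.2 ⟨_, _, _, _, rfl, rfl, a1, b1⟩, tm_append.2 ⟨_, _, _, _, rfl, rfl, a2, b2⟩⟩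
      · rw [drop_add]; abel
      · rw [Pi.add_apply, ea, eb, Multiset.coe_add]
    · rintro ⟨Γ₁, Δ, k₁, k₂, M, rfl, rfl, hM, a, b⟩
      obtain ⟨Γa, Γb, ka, kb, rfl, rfl, a1, b1⟩ := tm_cons.1 a
      obtain ⟨MA, MB, Δ₁, Δ₂, ka', kb', eA, eB, rfl, rfl, a2, b2⟩ := tm_split hM b
      refine tm_cons.2 ⟨drop x Γa + Δ₁, drop x Γb + Δ₂, ka + ka', kb + kb', ?_, by omega,
        (h _ _ _).2 ⟨_, _, _, _, _, rfl, rfl, eA, a1, a2⟩,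
        (ih _ _).2 ⟨_, _, _, _, _, rfl, rfl, eB, b1, b2⟩⟩
      rw [drop_add]; abel

theorem tj_subst (t : CTerm) : ∀ (x : ℕ) (u : CTerm) (Γ : TEnv) (k : ℕ) (L : LType),
    TJ Γ k (t.subst x u) L ↔ ∃ Γ₁ Δ k₁ k₂ M, Γ = drop x Γ₁ + Δ ∧ k = k₁ + k₂ ∧
      Γ₁ x = Multiset.ofList M ∧ TJ Γ₁ k₁ t L ∧ TM Δ k₂ u M := by
  induction t with
  | var n =>
    intro x u Γ k L
    simp only [CTerm.subst]
    by_cases hn : n = x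
    · subst hn
      simp only [if_true]
      constructor
      · intro h
        refine ⟨TEnv.single n L, Γ, 0, k, [L], by simp [drop_single_eq], by simp,
          by simp [TEnv.single], tj_var.2 ⟨rfl, rfl⟩,
          tm_cons.2 ⟨Γ, 0, k, 0, by simp, by simp, h, tm_nil.2 ⟨rfl, rfl⟩⟩⟩
      · rintro ⟨Γ₁, Δ, k₁, k₂, M, rfl, rfl, hM, a, b⟩
        obtain ⟨rfl, rfl⟩ := tj_var.1 a
        have : M = [L] := by
          have h2 : Multiset.ofList M = {L} := by rw [← hM]; simp [TEnv.single]
          simpa using h2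
        subst this
        obtain ⟨Γ₂, Δ', k₃, k₄, rfl, rfl, d, e⟩ := tm_cons.1 b
        obtain ⟨rfl, rfl⟩ := tm_nil.1 e
        simpa [drop_single_eq] using d
    · have key : ∀ m, drop x (TEnv.single n L) = TEnv.single m L →
        (TJ Γ k (.var m) L ↔ ∃ Γ₁ Δ k₁ k₂ M, Γ = drop x Γ₁ + Δ ∧ k = k₁ + k₂ ∧
          Γ₁ x = Multiset.ofList M ∧ TJ Γ₁ k₁ (.var n) L ∧ TM Δ k₂ u M) := by
        intro m hm
        have h0 : TEnv.single n L x = 0 := by simp [TEnv.single]; omega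
        constructor
        · intro h
          obtain ⟨rfl, rfl⟩ := tj_var.1 h
          exact ⟨TEnv.single n L, 0, 0, 0, [], by simp [hm], rfl, h0, tj_var.2 ⟨rfl, rfl⟩,
            tm_nil.2 ⟨rfl, rfl⟩⟩
        · rintro ⟨Γ₁, Δ, k₁, k₂, M, rfl, rfl, hM, a, b⟩
          obtain ⟨rfl, rfl⟩ := tj_var.1 a
          have : M = [] := by
            rw [h0] at hM
            simpa using hM.symm
          subst this
          obtain ⟨rfl, rfl⟩ := tm_nil.1 b
          exact tj_var.2 ⟨by simp [hm], rfl⟩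
      rw [if_neg hn]
      by_cases hx : x < n
      · rw [if_pos hx]
        exact key _ (drop_single_gt hx L)
      · rw [if_neg hx]
        exact key _ (drop_single_lt (by omega) L)
  | lam p t ih =>
    intro x u Γ k L
    simp only [CTerm.subst]
    rw [tj_lam]
    constructor
    · rintro ⟨q, N, L', rfl, h⟩
      obtain ⟨Γ₁, Δ, k₁, k₂, M, e, rfl, hM, a, b⟩ := (ih _ _ _ _ _).1 h
      obtain ⟨h0, b⟩ := (tm_lift _ _ _ _ _).1 b
      have e0 : Γ₁ 0 = Multiset.ofList N := by
        have := congrFun e 0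
        simp only [TEnv.cons, Pi.add_apply, h0, add_zero, drop] at this
        simpa using this.symm
      refine ⟨drop 0 Γ₁, drop 0 Δ, k₁, k₂, M, ?_, rfl, by simpa [drop] using hM, ?_, b⟩
      · have := congrArg (drop 0) e
        rw [drop0_cons, drop_add] at this
        rw [this]
        conv_lhs => rw [← cons_drop0 Γ₁, drop_cons, drop0_cons]
      · refine tj_lam.2 ⟨q, N, L', rfl, ?_⟩
        rw [← e0, cons_drop0]; exact a
    · rintro ⟨Γ₁, Δ, k₁, k₂, M, rfl, rfl, hM, a, b⟩
      obtain ⟨q, N, L', rfl, a'⟩ := tj_lam.1 a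
      refine ⟨q, N, L', rfl, (ih _ _ _ _ _).2 ⟨_, ins 0 Δ, k₁, k₂, M, ?_, rfl, ?_, a', ?_⟩⟩
      · rw [drop_cons]
        refine env_ext 0 ?_ ?_
        · rw [Pi.add_apply, ins_self]; simp [TEnv.cons]
        · rw [drop_add, drop0_cons, drop0_cons, drop_ins]
      · exact hM
      · rw [tm_lift, drop_ins]; exact ⟨ins_self _ _, b⟩
  | app q t s iht ihs =>
    intro x u Γ k L
    have ihM := tm_subst_aux (ihs x u)
    simp only [CTerm.subst]
    constructor
    · intro h'
      obtain ⟨Γ₁, Δ, k₁, k₂, N, p, rfl, rfl, a, b⟩ := tj_app.1 h'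
      obtain ⟨Γa, Δa, ka, ka', Ma, rfl, rfl, ea, a1, a2⟩ := (iht _ _ _ _ _).1 a
      obtain ⟨Γb, Δb, kb, kb', Mb, rfl, rfl, eb, b1, b2⟩ := (ihM _ _ _).1 b
      refine ⟨Γa + Γb, Δa + Δb, ka + kb + Player.gamma p q, ka' + kb', Ma ++ Mb, ?_, by omega, ?_,
        tj_app.2 ⟨_, _, _, _, _, _, rfl, rfl, a1, b1⟩, tm_append.2 ⟨_, _, _, _, rfl, rfl, a2, b2⟩⟩
      · rw [drop_add]; abel
      · rw [Pi.add_apply, ea, eb, Multiset.coe_add]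
    · rintro ⟨Γ₁, Δ, k₁, k₂, M, rfl, rfl, hM, a, b⟩
      obtain ⟨Γa, Γb, ka, kb, N, p, rfl, rfl, a1, b1⟩ := tj_app.1 a
      obtain ⟨MA, MB, Δ₁, Δ₂, ka', kb', eA, eB, rfl, rfl, a2, b2⟩ := tm_split hM b
      refine tj_app.2 ⟨drop x Γa + Δ₁, drop x Γb + Δ₂, ka + ka', kb + kb', N, p, ?_, by omega,
        (iht _ _ _ _ _).2 ⟨_, _, _, _, _, rfl, rfl, eA, a1, a2⟩,
        (ihM _ _ _).2 ⟨_, _, _, _, _, rfl, rfl, eB, b1, b2⟩⟩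
      rw [drop_add]; abel

theorem tj_beta (p : Player) (t u : CTerm) (Γ : TEnv) (k : ℕ) (L : LType) :
    TJ Γ k (.app p (.lam p t) u) L ↔ TJ Γ k (t.subst 0 u) L := by
  rw [tj_subst, tj_app]
  constructor
  · rintro ⟨Γ₁, Δ, k₁, k₂, M, p', rfl, rfl, a, b⟩
    obtain ⟨q, N, L', e, a⟩ := tj_lam.1 a
    cases e
    exact ⟨_, Δ, k₁, k₂, M, by rw [drop0_cons], by simp [Player.gamma], rfl, a, b⟩
  · rintro ⟨Γ₁, Δ, k₁, k₂, M, rfl, rfl, hM, a, b⟩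
    refine ⟨drop 0 Γ₁, Δ, k₁, k₂, M, p, rfl, by simp [Player.gamma], ?_, b⟩
    exact tj_lam.2 ⟨_, _, _, rfl, by rw [← hM, cons_drop0]; exact a⟩

theorem le_lam {t u : CTerm} (p : Player) (h : ∀ Γ k L, TJ Γ k t L → TJ Γ k u L) :
    ∀ Γ k L, TJ Γ k (.lam p t) L → TJ Γ k (.lam p u) L := by
  intro Γ k L
  rw [tj_lam, tj_lam]
  rintro ⟨q, M, L', rfl, d⟩
  exact ⟨q, M, L', rfl, h _ _ _ d⟩

theorem le_app {t u t' u' : CTerm} (p : Player) (h : ∀ Γ k L, TJ Γ k t L → TJ Γ k u L)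
    (h' : ∀ Γ k L, TJ Γ k t' L → TJ Γ k u' L) :
    ∀ Γ k L, TJ Γ k (.app p t t') L → TJ Γ k (.app p u u') L := by
  intro Γ k L
  rw [tj_app, tj_app]
  rintro ⟨Γ₁, Δ, k₁, k₂, M, q, rfl, rfl, a, b⟩
  exact ⟨_, _, _, _, _, _, rfl, rfl, h _ _ _ a, tm_mono h' _ _ _ b⟩

theorem step_iff {t u : CTerm} (h : StepTau t u) : ∀ Γ k L, TJ Γ k t L ↔ TJ Γ k u L := by
  unfold StepTau at h
  induction h with
  | root h =>
    cases h with
    | beta p t u => exact tj_beta p t u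
  | lam p _ ih =>
    exact fun Γ k L => ⟨le_lam p (fun Γ k L => (ih Γ k L).1) Γ k L,
      le_lam p (fun Γ k L => (ih Γ k L).2) Γ k L⟩
  | appL p u _ ih =>
    exact fun Γ k L => ⟨le_app p (fun Γ k L => (ih Γ k L).1) (fun _ _ _ => id) Γ k L,
      le_app p (fun Γ k L => (ih Γ k L).2) (fun _ _ _ => id) Γ k L⟩
  | appR p t _ ih =>
    exact fun Γ k L => ⟨le_app p (fun _ _ _ => id) (fun Γ k L => (ih Γ k L).1) Γ k L,
      le_app p (fun _ _ _ => id) (fun Γ k L => (ih Γ k L).2) Γ k L⟩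

theorem fill_le {t u : CTerm} (h : ∀ Γ k L, TJ Γ k t L → TJ Γ k u L) (C : CCtx) :
    ∀ Γ k L, TJ Γ k (C.fill t) L → TJ Γ k (C.fill u) L := by
  induction C with
  | hole => exact h
  | lam p C ih => exact le_lam p ih
  | appL p C s ih => exact le_app p ih (fun _ _ _ => id)
  | appR p s C ih => exact le_app p (fun _ _ _ => id) ih

/-- Compatibility and silent β-invariance of the checkers relational interpretation. -/
theorem csem_compatibility_and_silent_invariance :
    (∀ t u : CTerm, CSem t ⊆ CSem u → ∀ C : CCtx, CSem (C.fill t) ⊆ CSem (C.fill u)) ∧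
    (∀ t u : CTerm, StepTau t u → CSem t = CSem u) := by
  constructor
  · intro t u h C x hx
    exact fill_le (fun Γ k L d => @h (Γ, k, L) d) C _ _ _ hx
  · intro t u h
    ext x
    exact step_iff h _ _ _
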